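/- Under the polynomial parametric setting and the Archimedean assumption, assume K_y is nonempty for every y ∈ Y and that for φ-almost all y ∈ Y the value J(y) is attained at a unique minimizer x*(y). Let h ∈ ℝ[x] with h(x) = Σ_{α∈ℕ^n} h_α x^α, and for each i ≥ i_0 let z^i be a nearly optimal feasible solution of the i-th semidefinite relaxation with L_{z^i}(f) ≤ ρ_i + 1/i. Then lim_{i→∞} Σ_{α∈ℕ^n} h_α z^i_{α0} = ∫_Y h(x*(y)) dφ(y). -/

import Mathlib

open MeasureTheory MvPolynomial Filter Topology Set

noncomputable section

/-- The Riesz-like linear functional `L_z` associated with a double-indexed real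
sequence `z = (z_{αβ})`, sending `Σ f_{αβ} x^α y^β` to `Σ f_{αβ} z_{αβ}`. -/
def Lz (n p : ℕ) (z : (Fin n → ℕ) → (Fin p → ℕ) → ℝ)
    (q : MvPolynomial (Fin n ⊕ Fin p) ℝ) : ℝ :=
  ∑ d ∈ q.support, q.coeff d * z (fun k => d (Sum.inl k)) (fun l => d (Sum.inr l))

/-- Every monomial `x^α y^β` of `q` satisfies `|α| ≤ i` and `|β| ≤ i`, i.e. `q` is in the
span of the monomial basis indexing the moment matrix `M_i`. -/
def DegOK (n p : ℕ) (i : ℕ) (q : MvPolynomial (Fin n ⊕ Fin p) ℝ) : Prop :=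
  ∀ d ∈ q.support, (∑ k, d (Sum.inl k)) ≤ i ∧ (∑ l, d (Sum.inr l)) ≤ i

/-- `⌈deg h / 2⌉`. -/
def halfDeg {σ : Type*} (h : MvPolynomial σ ℝ) : ℕ := (h.totalDegree + 1) / 2

/-- Feasibility of the sequence `z` for the `i`-th moment relaxation:
`M_i(z) ⪰ 0`, `M_{i-v_j}(h_j z) ⪰ 0` for all `j`, and `L_z(y^β) = γ_β` for `|β| ≤ 2i`.
Positive semidefiniteness of the moment (resp. localizing) matrix is expressed through
nonnegativity of the associated quadratic forms `c ↦ cᵀ M_i(z) c = L_z(q²)`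
(resp. `cᵀ M_{i-v_j}(h_j z) c = L_z(h_j q²)`), `q` ranging over the polynomials spanned
by the monomials indexing the matrix. -/
def RelaxFeasible (n p : ℕ) {ι : Type*} [Fintype ι]
    (H : ι → MvPolynomial (Fin n ⊕ Fin p) ℝ)
    (γ : (Fin p → ℕ) → ℝ) (i : ℕ)
    (z : (Fin n → ℕ) → (Fin p → ℕ) → ℝ) : Prop :=
  (∀ q, DegOK n p i q → 0 ≤ Lz n p z (q ^ 2)) ∧
  (∀ j, ∀ q, DegOK n p (i - halfDeg (H j)) q → 0 ≤ Lz n p z (H j * q ^ 2)) ∧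
  (∀ β : Fin p → ℕ, (∑ l, β l) ≤ 2 * i → z (fun _ => 0) β = γ β)

/-- Optimal value `ρ_i` of the `i`-th (primal) semidefinite relaxation. -/
def rhoSDP (n p : ℕ) {ι : Type*} [Fintype ι]
    (H : ι → MvPolynomial (Fin n ⊕ Fin p) ℝ)
    (γ : (Fin p → ℕ) → ℝ) (f : MvPolynomial (Fin n ⊕ Fin p) ℝ) (i : ℕ) : ℝ :=
  sInf {r | ∃ z, RelaxFeasible n p H γ i z ∧ r = Lz n p z f}

/-- Evaluation of a polynomial in `(x, y)` at a point of `ℝ^n × ℝ^p`. -/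
def evalXY (n p : ℕ) (q : MvPolynomial (Fin n ⊕ Fin p) ℝ)
    (w : (Fin n → ℝ) × (Fin p → ℝ)) : ℝ :=
  eval (Sum.elim w.1 w.2) q

/-- Optimal value `ρ` of the infinite-dimensional problem `P`: the infimum of `∫_K f dμ`
over finite Borel measures `μ` on `K` whose marginal on `ℝ^p` is `φ`. -/
def rhoP (n p : ℕ) (f : MvPolynomial (Fin n ⊕ Fin p) ℝ)
    (K : Set ((Fin n → ℝ) × (Fin p → ℝ))) (φ : Measure (Fin p → ℝ)) : ℝ :=
  sInf {r | ∃ μ : Measure ((Fin n → ℝ) × (Fin p → ℝ)),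
    IsFiniteMeasure μ ∧ μ Kᶜ = 0 ∧ μ.map Prod.snd = φ ∧
    r = ∫ w in K, evalXY n p f w ∂μ}

/-- `i₀ := max(⌈deg f / 2⌉, max_j ⌈deg h_j / 2⌉)`. -/
def iZero (n p : ℕ) {ι : Type*} [Fintype ι]
    (H : ι → MvPolynomial (Fin n ⊕ Fin p) ℝ)
    (f : MvPolynomial (Fin n ⊕ Fin p) ℝ) : ℕ :=
  max (halfDeg f) (Finset.univ.sup fun j => halfDeg (H j))

/-- The Archimedean (Putinar) assumption for the family `H`: for some `N`,
`N - ‖(x,y)‖²` lies in the quadratic module generated by the `H j`. -/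
def ArchimedeanQM (n p : ℕ) {ι : Type*} [Fintype ι]
    (H : ι → MvPolynomial (Fin n ⊕ Fin p) ℝ) : Prop :=
  ∃ (N : ℝ) (σ0 : MvPolynomial (Fin n ⊕ Fin p) ℝ)
    (σ : ι → MvPolynomial (Fin n ⊕ Fin p) ℝ),
    IsSumSq σ0 ∧ (∀ j, IsSumSq (σ j)) ∧
    C N - (∑ i : Fin n ⊕ Fin p, X i ^ 2) = σ0 + ∑ j, σ j * H j

/-
Along any ultrafilter refining `atTop`, the functionals `L_{z^i}` are bounded by the archimedean
property and converge to a functional that is nonnegative on the quadratic module of the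
constraints. Such a functional is integration against a probability measure `μ` on `K`: the states
of the module are weakly compact, their extreme points are multiplicative, that is, evaluations at
points of `K`, and Krein-Milman applies. The moment constraints force the `y`-marginal of `μ` to be
`φ`. The image `ν` of `φ` under `y ↦ (x*(y), y)` is feasible for every relaxation, so near
optimality gives `∫ f dμ ≤ ∫ f dν`, and fibrewise uniqueness of the minimizer forces `μ = ν`. The
limit thus does not depend on the ultrafilter.
-/

section QuadraticModule

variable {A : Type*} [CommRing A]

/-- `M` is a quadratic module of the commutative ring `A`: an additive submonoid containing `1` and
stable under multiplication by squares. -/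
structure IsQuadraticModule (M : AddSubmonoid A) : Prop where
  one_mem : 1 ∈ M
  sq_mul_mem : ∀ (a : A) {x : A}, x ∈ M → a ^ 2 * x ∈ M

/-- The quadratic module generated by a family `H`. The generators `g * a ^ 2` with `g = 1` account
for the sums of squares. -/
def quadraticModule {ι : Type*} (H : ι → A) : AddSubmonoid A :=
  AddSubmonoid.closure {x | ∃ a, ∃ g ∈ insert 1 (range H), x = g * a ^ 2}

variable {M : AddSubmonoid A} {ι : Type*} {H : ι → A}

lemma IsQuadraticModule.sq_mem (hM : IsQuadraticModule M) (a : A) : a ^ 2 ∈ M := by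
  simpa only [mul_one] using hM.sq_mul_mem a hM.one_mem

lemma IsQuadraticModule.mul_mem_of_isSumSq (hM : IsQuadraticModule M) {s x : A} (hs : IsSumSq s)
    (hx : x ∈ M) : s * x ∈ M := by
  induction hs with
  | zero => simp
  | sq_add a _ ih =>
    rw [← sq, add_mul]
    exact add_mem (hM.sq_mul_mem a hx) ih

lemma mem_quadraticModule_of_mem_insert {g : A} (hg : g ∈ insert 1 (range H)) :
    g ∈ quadraticModule H :=
  AddSubmonoid.subset_closure ⟨1, g, hg, by ring⟩

lemma isQuadraticModule_quadraticModule : IsQuadraticModule (quadraticModule H) where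
  one_mem := mem_quadraticModule_of_mem_insert (mem_insert 1 _)
  sq_mul_mem a x hx := by
    unfold quadraticModule at hx ⊢
    induction hx using AddSubmonoid.closure_induction with
    | mem x hx =>
      obtain ⟨b, g, hg, rfl⟩ := hx
      exact AddSubmonoid.subset_closure ⟨a * b, g, hg, by ring⟩
    | zero => simp
    | add x y _ _ hx hy => rw [mul_add]; exact add_mem hx hy

variable [Algebra ℝ A]

/-- A quadratic module `M` of a real algebra is archimedean if every element is dominated, in the
preorder defined by `M`, by a real constant. -/
structure IsArchimedeanQuadraticModule (M : AddSubmonoid A) : Prop extends IsQuadraticModule M where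
  exists_sub_mem : ∀ a : A, ∃ N : ℝ, algebraMap ℝ A N - a ∈ M

lemma IsQuadraticModule.smul_mem (hM : IsQuadraticModule M) {c : ℝ} (hc : 0 ≤ c) {x : A}
    (hx : x ∈ M) : c • x ∈ M := by
  have h := hM.sq_mul_mem (algebraMap ℝ A √c) hx
  rwa [← map_pow, Real.sq_sqrt hc, ← Algebra.smul_def] at h

lemma IsQuadraticModule.algebraMap_mem (hM : IsQuadraticModule M) {c : ℝ} (hc : 0 ≤ c) :
    algebraMap ℝ A c ∈ M := by
  rw [Algebra.algebraMap_eq_smul_one]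
  exact hM.smul_mem hc hM.one_mem

lemma IsQuadraticModule.algebraMap_sub_mem_of_le (hM : IsQuadraticModule M) {c d : ℝ} (hcd : c ≤ d)
    {a : A} (ha : algebraMap ℝ A c - a ∈ M) : algebraMap ℝ A d - a ∈ M := by
  have h := add_mem (hM.algebraMap_mem (sub_nonneg.2 hcd)) ha
  rwa [map_sub, sub_add_sub_cancel] at h

-- `a + 1/4 = (a + 1/2) ^ 2 - a ^ 2`, so a bound on `a ^ 2` bounds `a`.
lemma IsQuadraticModule.algebraMap_sub_mem_of_sq (hM : IsQuadraticModule M) {c : ℝ} {a : A}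
    (ha : algebraMap ℝ A c - a ^ 2 ∈ M) : algebraMap ℝ A (c + (1 / 2) ^ 2) - a ∈ M := by
  have htwo : (2 : A) * algebraMap ℝ A (1 / 2) = 1 := by
    rw [← map_ofNat (algebraMap ℝ A) 2, ← map_mul]; norm_num
  convert add_mem ha (hM.sq_mem (a - algebraMap ℝ A (1 / 2))) using 1
  rw [map_add, map_pow]
  linear_combination a * htwo

end QuadraticModule

section State

variable {A : Type*} [CommRing A] [Algebra ℝ A] {M : AddSubmonoid A} {L : A →ₗ[ℝ] ℝ}

/-- A state of `M`: a normalised linear functional that is nonnegative on `M`. -/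
structure IsState (M : AddSubmonoid A) (L : A →ₗ[ℝ] ℝ) : Prop where
  map_one : L 1 = 1
  map_nonneg : ∀ x ∈ M, 0 ≤ L x

/-- The states of `M` as a subset of `A → ℝ`, where the product topology is the weak-* topology. -/
def stateSpace (M : AddSubmonoid A) : Set (A → ℝ) :=
  (fun L : A →ₗ[ℝ] ℝ => ⇑L) '' {L | IsState M L}

lemma map_algebraMap_of_map_one (hL : L 1 = 1) (c : ℝ) : L (algebraMap ℝ A c) = c := by
  rw [Algebra.algebraMap_eq_smul_one, map_smul, hL, smul_eq_mul, mul_one]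

lemma sq_map_mul_mul_le {x : A} (hL : ∀ a, 0 ≤ L (a * a * x)) (a b : A) :
    L (a * b * x) ^ 2 ≤ L (a * a * x) * L (b * b * x) :=
  LinearMap.BilinForm.apply_sq_le_of_symm
    ((LinearMap.mul ℝ A).compr₂ (L ∘ₗ LinearMap.mulRight ℝ x)) hL
    ⟨fun a b => by simp [mul_comm]⟩ a b

lemma mul_le_mul_succ_of_sq_le {m : ℕ → ℝ} (hm : ∀ k, 0 ≤ m k)
    (hconv : ∀ k, m (k + 1) ^ 2 ≤ m k * m (k + 2)) (k : ℕ) : m 1 * m k ≤ m 0 * m (k + 1) := by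
  induction k with
  | zero => rw [mul_comm]
  | succ k ih =>
    rcases (hm k).eq_or_lt with h0 | hpos
    · have : m (k + 1) = 0 := by simpa [← h0] using hconv k
      simpa [this] using mul_nonneg (hm 0) (hm (k + 2))
    · refine le_of_mul_le_mul_right ?_ hpos
      calc m 1 * m (k + 1) * m k = m 1 * m k * m (k + 1) := by ring
        _ ≤ m 0 * m (k + 1) * m (k + 1) := mul_le_mul_of_nonneg_right ih (hm _)
        _ = m 0 * m (k + 1) ^ 2 := by ring
        _ ≤ m 0 * (m k * m (k + 2)) := mul_le_mul_of_nonneg_left (hconv k) (hm 0)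
        _ = m 0 * m (k + 1 + 1) * m k := by ring

lemma pow_mul_le_of_mul_le_mul_succ {m : ℕ → ℝ} (hm : ∀ k, 0 ≤ m k)
    (h : ∀ k, m 1 * m k ≤ m 0 * m (k + 1)) (k : ℕ) : m 1 ^ k * m 0 ≤ m 0 ^ k * m k := by
  induction k with
  | zero => simp
  | succ k ih =>
    calc m 1 ^ (k + 1) * m 0 = m 1 * (m 1 ^ k * m 0) := by ring
      _ ≤ m 1 * (m 0 ^ k * m k) := mul_le_mul_of_nonneg_left ih (hm 1)
      _ = m 0 ^ k * (m 1 * m k) := by ring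
      _ ≤ m 0 ^ k * (m 0 * m (k + 1)) := mul_le_mul_of_nonneg_left (h k) (pow_nonneg (hm 0) k)
      _ = m 0 ^ (k + 1) * m (k + 1) := by ring

lemma le_mul_of_sq_le_of_le_mul_pow {m : ℕ → ℝ} (hm : ∀ k, 0 ≤ m k)
    (hconv : ∀ k, m (k + 1) ^ 2 ≤ m k * m (k + 2)) {N D : ℝ} (hN : 0 < N)
    (hbound : ∀ k, m k ≤ D * N ^ k) : m 1 ≤ N * m 0 := by
  by_contra! hlt
  rcases (hm 0).eq_or_lt with h0 | h0
  · have : m 1 = 0 := by simpa [← h0] using hconv 0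
    simp [← h0, this] at hlt
  · have hratio : 1 < m 1 / (N * m 0) := by rwa [one_lt_div (by positivity)]
    obtain ⟨k, hk⟩ := pow_unbounded_of_one_lt (D / m 0) hratio
    have hgrowth := (pow_mul_le_of_mul_le_mul_succ hm (mul_le_mul_succ_of_sq_le hm hconv) k).trans
      (mul_le_mul_of_nonneg_left (hbound k) (by positivity))
    rw [div_pow, lt_div_iff₀ (by positivity), div_mul_eq_mul_div, div_lt_iff₀ h0, mul_pow] at hk
    linarith

lemma IsState.map_sq_pow_le (hM : IsQuadraticModule M) (hL : IsState M L) {a : A} {N : ℝ}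
    (hN : 0 ≤ N) (ha : algebraMap ℝ A N - a ^ 2 ∈ M) (k : ℕ) : L ((a ^ k) ^ 2) ≤ N ^ k := by
  induction k with
  | zero => simp [hL.map_one]
  | succ k ih =>
    have h := hL.map_nonneg _ (hM.sq_mul_mem (a ^ k) ha)
    rw [mul_sub, mul_comm _ (algebraMap ℝ A N), ← Algebra.smul_def, ← mul_pow, ← pow_succ, map_sub,
      map_smul, sub_nonneg, smul_eq_mul] at h
    calc L ((a ^ (k + 1)) ^ 2) ≤ N * L ((a ^ k) ^ 2) := h
      _ ≤ N * N ^ k := by gcongr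
      _ = N ^ (k + 1) := by ring

-- `k ↦ L (a ^ (2 * k) * x)` is log-convex and `O(N ^ k)`, hence cannot grow faster than `N` at the
-- first step. Membership of `(N - a ^ 2) * x` in `M` itself may fail.
lemma IsState.map_sq_mul_le (hM : IsArchimedeanQuadraticModule M) (hL : IsState M L) {a x : A}
    {N : ℝ} (hN : 0 < N) (ha : algebraMap ℝ A N - a ^ 2 ∈ M) (hx : x ∈ M) :
    L (a ^ 2 * x) ≤ N * L x := by
  have hnonneg (b : A) : 0 ≤ L (b * b * x) := by
    rw [← sq]; exact hL.map_nonneg _ (hM.sq_mul_mem b hx)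
  obtain ⟨D, hD⟩ := hM.exists_sub_mem x
  have hD0 : 0 ≤ D := by
    have h := hL.map_nonneg _ hD
    rw [map_sub, map_algebraMap_of_map_one hL.map_one] at h
    linarith [hL.map_nonneg _ hx]
  have hbound (k : ℕ) : L (a ^ k * a ^ k * x) ≤ D * N ^ k := by
    have h := hL.map_nonneg _ (hM.sq_mul_mem (a ^ k) hD)
    rw [mul_sub, mul_comm _ (algebraMap ℝ A D), ← Algebra.smul_def, map_sub, map_smul, sub_nonneg,
      smul_eq_mul, sq (a ^ k)] at h
    refine h.trans (mul_le_mul_of_nonneg_left ?_ hD0)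
    simpa only [sq] using hL.map_sq_pow_le hM.toIsQuadraticModule hN.le ha k
  have hconv (k : ℕ) : L (a ^ (k + 1) * a ^ (k + 1) * x) ^ 2 ≤
      L (a ^ k * a ^ k * x) * L (a ^ (k + 2) * a ^ (k + 2) * x) := by
    convert sq_map_mul_mul_le hnonneg (a ^ k) (a ^ (k + 2)) using 4
    ring
  simpa [sq] using
    le_mul_of_sq_le_of_le_mul_pow (m := fun k => L (a ^ k * a ^ k * x)) (fun k => hnonneg _) hconv
      hN hbound

lemma coe_mem_stateSpace_iff : ⇑L ∈ stateSpace M ↔ IsState M L :=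
  DFunLike.coe_injective.mem_set_image

lemma convex_stateSpace : Convex ℝ (stateSpace M) := by
  rintro _ ⟨L, hL, rfl⟩ _ ⟨L', hL', rfl⟩ s t hs ht hst
  refine ⟨s • L + t • L', ⟨?_, fun x hx => ?_⟩, rfl⟩
  · simp [hL.map_one, hL'.map_one, hst]
  · exact add_nonneg (mul_nonneg hs (hL.map_nonneg x hx)) (mul_nonneg ht (hL'.map_nonneg x hx))

-- `L` is the barycentre of the states `(P + L) / (P 1 + 1)` and `(2 L - P) / (2 - P 1)`; the shift
-- by `L` keeps both denominators positive.
lemma eq_smul_of_mem_extremePoints_stateSpace (hM : IsQuadraticModule M)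
    (hL : ⇑L ∈ extremePoints ℝ (stateSpace M)) {P : A →ₗ[ℝ] ℝ} (hP : ∀ x ∈ M, 0 ≤ P x)
    (hPL : ∀ x ∈ M, P x ≤ L x) : P = P 1 • L := by
  rw [mem_extremePoints_iff_left] at hL
  obtain ⟨hstate, hext⟩ := hL
  have hL := coe_mem_stateSpace_iff.1 hstate
  set c := P 1
  have hc0 : 0 ≤ c := hP 1 hM.one_mem
  have hc1 : c ≤ 1 := (hPL 1 hM.one_mem).trans_eq hL.map_one
  have hleft : IsState M ((c + 1)⁻¹ • (P + L)) := by
    refine ⟨?_, fun x hx => ?_⟩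
    · rw [LinearMap.smul_apply, LinearMap.add_apply, hL.map_one, smul_eq_mul]
      exact inv_mul_cancel₀ (by positivity)
    · exact mul_nonneg (by positivity) (add_nonneg (hP x hx) (hL.map_nonneg x hx))
  have hright : IsState M ((2 - c)⁻¹ • ((2 : ℝ) • L - P)) := by
    refine ⟨?_, fun x hx => ?_⟩
    · rw [LinearMap.smul_apply, LinearMap.sub_apply, LinearMap.smul_apply, hL.map_one, smul_eq_mul,
        smul_eq_mul, mul_one]
      exact inv_mul_cancel₀ (by linarith)
    · refine mul_nonneg (inv_nonneg.2 (by linarith)) ?_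
      have := hPL x hx
      have := hL.map_nonneg x hx
      simp only [LinearMap.sub_apply, LinearMap.smul_apply, smul_eq_mul]
      linarith
  have hext_eq : ⇑((c + 1)⁻¹ • (P + L)) = ⇑L := by
    refine hext _ (coe_mem_stateSpace_iff.2 hleft) _ (coe_mem_stateSpace_iff.2 hright)
      ⟨(c + 1) / 3, (2 - c) / 3, by positivity, by linarith, by ring, ?_⟩
    have : 2 - c ≠ 0 := by linarith
    funext x
    simp only [LinearMap.smul_apply, LinearMap.add_apply, LinearMap.sub_apply, Pi.add_apply,
      Pi.smul_apply, smul_eq_mul]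
    field_simp
    ring
  ext x
  have h := congrFun hext_eq x
  simp only [LinearMap.smul_apply, LinearMap.add_apply, smul_eq_mul] at h ⊢
  rw [inv_mul_eq_iff_eq_mul₀ (by positivity)] at h
  linarith

lemma map_sq_mul_of_mem_extremePoints_stateSpace (hM : IsArchimedeanQuadraticModule M)
    (hL : ⇑L ∈ extremePoints ℝ (stateSpace M)) (a x : A) : L (a ^ 2 * x) = L (a ^ 2) * L x := by
  have hstate : IsState M L := coe_mem_stateSpace_iff.1 hL.1
  obtain ⟨N, hN⟩ := hM.exists_sub_mem (a ^ 2)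
  obtain ⟨N, hN0, hN⟩ : ∃ N : ℝ, 0 < N ∧ algebraMap ℝ A N - a ^ 2 ∈ M :=
    ⟨max N 1, by positivity, hM.algebraMap_sub_mem_of_le (le_max_left N 1) hN⟩
  have hprop := eq_smul_of_mem_extremePoints_stateSpace hM.toIsQuadraticModule hL
    (P := N⁻¹ • (L ∘ₗ LinearMap.mulLeft ℝ (a ^ 2)))
    (fun x hx => mul_nonneg (by positivity) (hstate.map_nonneg _ (hM.sq_mul_mem a hx)))
    (fun x hx => (inv_mul_le_iff₀ hN0).2 (hstate.map_sq_mul_le hM hN0 hN hx))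
  have h := LinearMap.congr_fun hprop x
  simp only [LinearMap.smul_apply, LinearMap.comp_apply, LinearMap.mulLeft_apply, smul_eq_mul,
    mul_one, mul_assoc] at h
  exact mul_left_cancel₀ (inv_ne_zero hN0.ne') h

lemma map_mul_of_mem_extremePoints_stateSpace (hM : IsArchimedeanQuadraticModule M)
    (hL : ⇑L ∈ extremePoints ℝ (stateSpace M)) (a b : A) : L (a * b) = L a * L b := by
  have hpolarization : (4 : ℝ) • a = (a + 1) ^ 2 - (a - 1) ^ 2 := by
    rw [Algebra.smul_def, map_ofNat]; ring
  refine mul_left_cancel₀ (four_ne_zero' ℝ) ?_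
  calc 4 * L (a * b) = L ((4 : ℝ) • a * b) := by rw [smul_mul_assoc, map_smul, smul_eq_mul]
    _ = L ((a + 1) ^ 2) * L b - L ((a - 1) ^ 2) * L b := by
      rw [hpolarization, sub_mul, map_sub, map_sq_mul_of_mem_extremePoints_stateSpace hM hL,
        map_sq_mul_of_mem_extremePoints_stateSpace hM hL]
    _ = L ((4 : ℝ) • a) * L b := by rw [hpolarization, map_sub, sub_mul]
    _ = 4 * (L a * L b) := by rw [map_smul, smul_eq_mul, mul_assoc]

lemma exists_algHom_of_mem_extremePoints_stateSpace (hM : IsArchimedeanQuadraticModule M)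
    {l : A → ℝ} (hl : l ∈ extremePoints ℝ (stateSpace M)) :
    ∃ χ : A →ₐ[ℝ] ℝ, (∀ x ∈ M, 0 ≤ χ x) ∧ ⇑χ = l := by
  obtain ⟨L, hL, rfl⟩ := hl.1
  exact ⟨AlgHom.ofLinearMap L hL.map_one (map_mul_of_mem_extremePoints_stateSpace hM hl),
    hL.map_nonneg, rfl⟩

lemma exists_isState_tendsto (hM : IsArchimedeanQuadraticModule M) {ι : Type*} {U : Ultrafilter ι}
    {Λ : ι → A →ₗ[ℝ] ℝ} (hone : ∀ᶠ i in U, Λ i 1 = 1) (hpos : ∀ x ∈ M, ∀ᶠ i in U, 0 ≤ Λ i x) :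
    ∃ L, IsState M L ∧ ∀ a, Tendsto (fun i => Λ i a) U (𝓝 (L a)) := by
  have hlim (a : A) : ∃ l : ℝ, Tendsto (fun i => Λ i a) U (𝓝 l) := by
    obtain ⟨N, hN⟩ := hM.exists_sub_mem a
    obtain ⟨N', hN'⟩ := hM.exists_sub_mem (-a)
    have hmem : ∀ᶠ i in U, Λ i a ∈ Icc (-N') N := by
      filter_upwards [hone, hpos _ hN, hpos _ hN'] with i h1 hi hi'
      rw [map_sub, map_algebraMap_of_map_one h1] at hi hi'
      rw [map_neg] at hi'
      constructor <;> linarith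
    obtain ⟨l, -, hl⟩ := isCompact_Icc.ultrafilter_le_nhds (U.map fun i => Λ i a)
      (le_principal_iff.2 hmem)
    exact ⟨l, hl⟩
  choose l hl using hlim
  refine ⟨linearMapOfTendsto l Λ (tendsto_pi_nhds.2 hl), ⟨?_, fun x hx => ?_⟩, hl⟩
  · exact tendsto_nhds_unique (hl 1) (tendsto_const_nhds.congr' (EventuallyEq.symm hone))
  · exact ge_of_tendsto (hl x) (hpos x hx)

lemma isCompact_stateSpace (hM : IsArchimedeanQuadraticModule M) : IsCompact (stateSpace M) := by
  refine isCompact_iff_ultrafilter_le_nhds.2 fun U hU => ?_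
  have hUmem : ∀ᶠ l in U, l ∈ stateSpace M := le_principal_iff.1 hU
  choose! Λ hstate hcoe using
    fun (l : A → ℝ) (hl : l ∈ stateSpace M) => (mem_image _ _ _).1 hl
  obtain ⟨L, hL, hlim⟩ := exists_isState_tendsto hM (U := U) (Λ := Λ)
    (hUmem.mono fun l hl => (hstate l hl).map_one)
    (fun x hx => hUmem.mono fun l hl => (hstate l hl).map_nonneg x hx)
  refine ⟨L, coe_mem_stateSpace_iff.2 hL, tendsto_id'.1 (tendsto_pi_nhds.2 fun a => ?_)⟩
  exact (hlim a).congr' (hUmem.mono fun l hl => congrFun (hcoe l hl) a)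

lemma stateSpace_subset_closure_convexHull (hM : IsArchimedeanQuadraticModule M) :
    stateSpace M ⊆
      closure (convexHull ℝ ((fun χ : A →ₐ[ℝ] ℝ => ⇑χ) '' {χ | ∀ x ∈ M, 0 ≤ χ x})) := by
  rw [← closure_convexHull_extremePoints (isCompact_stateSpace hM) convex_stateSpace]
  exact closure_mono <| convexHull_mono fun l hl =>
    exists_algHom_of_mem_extremePoints_stateSpace hM hl

end State

section PolynomialQuadraticModule

variable {σ ι : Type*} {H : ι → MvPolynomial σ ℝ} {M : AddSubmonoid (MvPolynomial σ ℝ)}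

/-- The basic closed semialgebraic set defined by the inequalities `0 ≤ H j`; for the constraints of
the problem it is the set `K`, as a subset of `ℝ^n × ℝ^p = (Fin n ⊕ Fin p → ℝ)`. -/
def semialgebraicSet (H : ι → MvPolynomial σ ℝ) : Set (σ → ℝ) :=
  {w | ∀ j, 0 ≤ eval w (H j)}

lemma isClosed_semialgebraicSet : IsClosed (semialgebraicSet H) := by
  rw [semialgebraicSet, ofPred_forall]
  exact isClosed_iInter fun j => isClosed_le continuous_const (continuous_eval _)

lemma eval_nonneg_of_mem_quadraticModule {w : σ → ℝ} (hw : w ∈ semialgebraicSet H)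
    {q : MvPolynomial σ ℝ} (hq : q ∈ quadraticModule H) : 0 ≤ eval w q := by
  unfold quadraticModule at hq
  induction hq using AddSubmonoid.closure_induction with
  | mem q hq =>
    obtain ⟨a, g, rfl | ⟨j, rfl⟩, rfl⟩ := hq
    · rw [one_mul, map_pow]
      exact sq_nonneg _
    · rw [map_mul, map_pow]
      exact mul_nonneg (hw j) (sq_nonneg _)
  | zero => simp
  | add q r _ _ hq hr => rw [map_add]; exact add_nonneg hq hr

lemma IsQuadraticModule.C_sub_X_sq_mem [Fintype σ] (hM : IsQuadraticModule M) {N : ℝ}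
    (hN : C N - ∑ i, X i ^ 2 ∈ M) (i : σ) : C N - X i ^ 2 ∈ M := by
  classical
  have h := add_mem hN (sum_mem (t := Finset.univ.erase i) fun j _ => hM.sq_mem (X j))
  rwa [← Finset.add_sum_erase _ _ (Finset.mem_univ i), ← sub_sub, sub_add_cancel] at h

lemma IsQuadraticModule.exists_C_sub_sq_mem [Fintype σ] (hM : IsQuadraticModule M) {N : ℝ}
    (hN : C N - ∑ i, X i ^ 2 ∈ M) (a : MvPolynomial σ ℝ) :
    ∃ c : ℝ, 0 ≤ c ∧ C c - a ^ 2 ∈ M := by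
  induction a using MvPolynomial.induction_on with
  | C c => exact ⟨c ^ 2, sq_nonneg c, by simp⟩
  | add a b ha hb =>
    obtain ⟨c, hc, ha⟩ := ha
    obtain ⟨d, hd, hb⟩ := hb
    refine ⟨2 * c + 2 * d, by positivity, ?_⟩
    -- the parallelogram identity
    have hsum : C (2 * c + 2 * d) - (a + b) ^ 2 =
        (2 : ℝ) • (C c - a ^ 2) + (2 : ℝ) • (C d - b ^ 2) + (a - b) ^ 2 := by
      simp only [smul_eq_C_mul, map_add, map_mul, map_ofNat]
      ring
    rw [hsum]
    exact add_mem (add_mem (hM.smul_mem zero_le_two ha) (hM.smul_mem zero_le_two hb))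
      (hM.sq_mem _)
  | mul_X a i ha =>
    obtain ⟨c, hc, ha⟩ := ha
    have hX : C (max N 0) - X i ^ 2 ∈ M :=
      hM.algebraMap_sub_mem_of_le (le_max_left N 0) (hM.C_sub_X_sq_mem hN i)
    refine ⟨c * max N 0, by positivity, ?_⟩
    have hprod : C (c * max N 0) - (a * X i) ^ 2 =
        X i ^ 2 * (C c - a ^ 2) + c • (C (max N 0) - X i ^ 2) := by
      rw [smul_eq_C_mul, map_mul]
      ring
    rw [hprod]
    exact add_mem (hM.sq_mul_mem _ ha) (hM.smul_mem hc hX)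

lemma IsQuadraticModule.isArchimedeanQuadraticModule [Fintype σ] (hM : IsQuadraticModule M) {N : ℝ}
    (hN : C N - ∑ i, X i ^ 2 ∈ M) : IsArchimedeanQuadraticModule M where
  toIsQuadraticModule := hM
  exists_sub_mem a :=
    let ⟨_, _, hc⟩ := hM.exists_C_sub_sq_mem hN a
    ⟨_, hM.algebraMap_sub_mem_of_sq hc⟩

lemma isCompact_semialgebraicSet (hM : IsArchimedeanQuadraticModule (quadraticModule H)) :
    IsCompact (semialgebraicSet H) := by
  have hbound (i : σ) (s : ℝ) : ∃ N, ∀ w ∈ semialgebraicSet H, s * w i ≤ N := by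
    obtain ⟨N, hN⟩ := hM.exists_sub_mem (C s * X i)
    refine ⟨N, fun w hw => ?_⟩
    simpa [algebraMap_eq] using eval_nonneg_of_mem_quadraticModule hw hN
  choose N hN using hbound
  refine (isCompact_univ_pi fun i => isCompact_Icc (a := -N i (-1)) (b := N i 1)).of_isClosed_subset
    isClosed_semialgebraicSet fun w hw i _ => ⟨?_, ?_⟩
  · linarith [hN i (-1) w hw]
  · linarith [hN i 1 w hw]

end PolynomialQuadraticModule

section CompactlySupportedMeasure

lemma integrable_of_ae_mem_of_isCompact {Ω : Type*} [TopologicalSpace Ω] [T2Space Ω]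
    [SecondCountableTopology Ω] [MeasurableSpace Ω] [BorelSpace Ω] {S : Set Ω} {μ : Measure Ω}
    [IsFiniteMeasure μ] {F : Ω → ℝ} (hF : Continuous F) (hS : IsCompact S) (hμ : ∀ᵐ w ∂μ, w ∈ S) :
    Integrable F μ := by
  rw [← Measure.restrict_eq_self_of_ae_mem hμ]
  exact hF.continuousOn.integrableOn_compact hS

variable {T : Type*} [TopologicalSpace T] [CompactSpace T] [MeasurableSpace T] [BorelSpace T]

lemma continuous_integral_continuousMap (μ : Measure T) [IsFiniteMeasure μ] :
    Continuous fun g : C(T, ℝ) => ∫ t, g t ∂μ :=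
  (continuous_integral.comp (ContinuousMap.toLp 1 μ ℝ).continuous).congr fun g =>
    integral_congr_ae (ContinuousMap.coeFn_toLp μ g)

lemma measure_ext_of_separatesPoints [HasOuterApproxClosed T] {μ ν : Measure T} [IsFiniteMeasure μ]
    [IsFiniteMeasure ν] {A : Subalgebra ℝ C(T, ℝ)} (hA : A.SeparatesPoints)
    (h : ∀ g ∈ A, ∫ t, g t ∂μ = ∫ t, g t ∂ν) : μ = ν := by
  have hclosed : IsClosed {g : C(T, ℝ) | ∫ t, g t ∂μ = ∫ t, g t ∂ν} :=
    isClosed_eq (continuous_integral_continuousMap μ) (continuous_integral_continuousMap ν)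
  refine ext_of_forall_integral_eq_of_IsFiniteMeasure fun g => ?_
  have hg := ContinuousMap.subalgebra_topologicalClosure_eq_top_of_separatesPoints A hA ▸
    Algebra.mem_top (x := g.toContinuousMap)
  exact closure_minimal h hclosed hg

lemma convex_range_integral {A : Type*} (e : A → C(T, ℝ)) :
    Convex ℝ (range fun (μ : ProbabilityMeasure T) a => ∫ t, e a t ∂μ) := by
  rintro _ ⟨μ, rfl⟩ _ ⟨ν, rfl⟩ r s hr hs hrs
  have hprob : IsProbabilityMeasure
      (ENNReal.ofReal r • (μ : Measure T) + ENNReal.ofReal s • (ν : Measure T)) := ⟨by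
    rw [Measure.add_apply, Measure.smul_apply, Measure.smul_apply, measure_univ, measure_univ,
      smul_eq_mul, smul_eq_mul, mul_one, mul_one, ← ENNReal.ofReal_add hr hs, hrs,
      ENNReal.ofReal_one]⟩
  refine ⟨⟨_, hprob⟩, funext fun a => ?_⟩
  have hint (ρ : ProbabilityMeasure T) (c : ℝ) :
      Integrable (e a) (ENNReal.ofReal c • (ρ : Measure T)) :=
    ((e a).continuous.integrable_of_hasCompactSupport
      (HasCompactSupport.of_compactSpace _)).smul_measure ENNReal.ofReal_ne_top
  calc ∫ t, e a t ∂(ENNReal.ofReal r • (μ : Measure T) + ENNReal.ofReal s • (ν : Measure T))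
      = r • ∫ t, e a t ∂μ + s • ∫ t, e a t ∂ν := by
        rw [integral_add_measure (hint μ r) (hint ν s), integral_smul_measure,
          integral_smul_measure, ENNReal.toReal_ofReal hr, ENNReal.toReal_ofReal hs]

lemma exists_probabilityMeasure_of_mem_closure_convexHull [T2Space T] {A : Type*} {e : A → C(T, ℝ)}
    {l : A → ℝ} (hl : l ∈ closure (convexHull ℝ (range fun t a => e a t))) :
    ∃ μ : ProbabilityMeasure T, ∀ a, l a = ∫ t, e a t ∂μ := by
  have hcont : Continuous fun (μ : ProbabilityMeasure T) a => ∫ t, e a t ∂μ :=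
    continuous_pi fun a => continuous_iff_continuousAt.2 fun μ =>
      ProbabilityMeasure.tendsto_iff_forall_integral_tendsto.1 tendsto_id
        (BoundedContinuousFunction.mkOfCompact (e a))
  have hdirac : (range fun t a => e a t) ⊆
      range fun (μ : ProbabilityMeasure T) a => ∫ t, e a t ∂μ := by
    rintro _ ⟨t, rfl⟩
    refine ⟨⟨Measure.dirac t, inferInstance⟩, funext fun a => ?_⟩
    exact integral_dirac' _ _ (e a).continuous.stronglyMeasurable
  obtain ⟨μ, rfl⟩ := closure_minimal (convexHull_min hdirac (convex_range_integral e))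
    (isCompact_range hcont).isClosed hl
  exact ⟨μ, fun a => rfl⟩

end CompactlySupportedMeasure

section PolynomialIntegral

variable {σ : Type*} {S : Set (σ → ℝ)}

/-- The restriction homomorphism from polynomials to continuous functions on `S`; for compact `S`
its range is the subalgebra to which Stone-Weierstrass is applied. -/
def evalOnAlgHom (S : Set (σ → ℝ)) : MvPolynomial σ ℝ →ₐ[ℝ] C(S, ℝ) :=
  aeval fun i => ⟨fun w => w.1 i, (continuous_apply i).comp continuous_subtype_val⟩

lemma evalOnAlgHom_apply (q : MvPolynomial σ ℝ) (w : S) : evalOnAlgHom S q w = eval w.1 q := by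
  induction q using MvPolynomial.induction_on with
  | C c => simp [evalOnAlgHom]
  | add q r hq hr => rw [map_add, map_add, ContinuousMap.add_apply, hq, hr]
  | mul_X q i hq => rw [map_mul, map_mul, ContinuousMap.mul_apply, hq]; simp [evalOnAlgHom]

lemma separatesPoints_range_evalOnAlgHom : (evalOnAlgHom S).range.SeparatesPoints := by
  intro v w hvw
  obtain ⟨i, hi⟩ := Function.ne_iff.1 (Subtype.coe_ne_coe.2 hvw)
  exact ⟨_, ⟨_, ⟨X i, rfl⟩, rfl⟩, by simpa [evalOnAlgHom_apply] using hi⟩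

variable {ι : Type*} {H : ι → MvPolynomial σ ℝ}

lemma algHom_apply_eq_eval (χ : MvPolynomial σ ℝ →ₐ[ℝ] ℝ) (q : MvPolynomial σ ℝ) :
    χ q = eval (χ ∘ X) q := by
  rw [← coe_aeval_eq_eval, RingHom.coe_coe, ← aeval_unique]

lemma comp_X_mem_semialgebraicSet {χ : MvPolynomial σ ℝ →ₐ[ℝ] ℝ}
    (hχ : ∀ q ∈ quadraticModule H, 0 ≤ χ q) : χ ∘ X ∈ semialgebraicSet H := fun j => by
  rw [← algHom_apply_eq_eval]
  exact hχ _ (mem_quadraticModule_of_mem_insert (mem_insert_of_mem 1 (mem_range_self j)))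

variable [Countable σ]

lemma measure_ext_of_integral_eval_eq (hS : IsCompact S) {μ ν : Measure (σ → ℝ)} [IsFiniteMeasure μ]
    [IsFiniteMeasure ν] (hμ : ∀ᵐ w ∂μ, w ∈ S) (hν : ∀ᵐ w ∂ν, w ∈ S)
    (h : ∀ q : MvPolynomial σ ℝ, ∫ w, eval w q ∂μ = ∫ w, eval w q ∂ν) : μ = ν := by
  have : CompactSpace S := isCompact_iff_compactSpace.1 hS
  have hSm := hS.measurableSet
  have hcomap : μ.comap (Subtype.val : S → σ → ℝ) = ν.comap Subtype.val := by
    refine measure_ext_of_separatesPoints (separatesPoints_range_evalOnAlgHom (S := S)) ?_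
    rintro _ ⟨q, rfl⟩
    simp only [AlgHom.toRingHom_eq_coe, RingHom.coe_coe, evalOnAlgHom_apply]
    rw [integral_subtype_comap hSm fun w => eval w q, integral_subtype_comap hSm fun w => eval w q,
      Measure.restrict_eq_self_of_ae_mem hμ, Measure.restrict_eq_self_of_ae_mem hν, h]
  rw [← Measure.restrict_eq_self_of_ae_mem hμ, ← Measure.restrict_eq_self_of_ae_mem hν,
    ← map_comap_subtype_coe hSm, ← map_comap_subtype_coe hSm, hcomap]

-- By Krein-Milman the states are limits of convex combinations of algebra homomorphisms, which are
-- point evaluations on `semialgebraicSet H`.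
lemma IsState.exists_measure (hM : IsArchimedeanQuadraticModule (quadraticModule H))
    {L : MvPolynomial σ ℝ →ₗ[ℝ] ℝ} (hL : IsState (quadraticModule H) L) :
    ∃ μ : Measure (σ → ℝ), IsProbabilityMeasure μ ∧ (∀ᵐ w ∂μ, w ∈ semialgebraicSet H) ∧
      ∀ q, L q = ∫ w, eval w q ∂μ := by
  have : CompactSpace (semialgebraicSet H) :=
    isCompact_iff_compactSpace.1 (isCompact_semialgebraicSet hM)
  have hHm : MeasurableSet (semialgebraicSet H) := isClosed_semialgebraicSet.measurableSet
  have hchar : (fun χ : MvPolynomial σ ℝ →ₐ[ℝ] ℝ => ⇑χ) '' {χ | ∀ q ∈ quadraticModule H, 0 ≤ χ q} ⊆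
      range fun (w : semialgebraicSet H) q => evalOnAlgHom (semialgebraicSet H) q w := by
    rintro _ ⟨χ, hχ, rfl⟩
    let w : semialgebraicSet H := ⟨χ ∘ X, comp_X_mem_semialgebraicSet hχ⟩
    refine ⟨w, funext fun q => ?_⟩
    exact (evalOnAlgHom_apply q w).trans (algHom_apply_eq_eval χ q).symm
  obtain ⟨μ, hμ⟩ := exists_probabilityMeasure_of_mem_closure_convexHull <|
    closure_mono (convexHull_mono hchar) <|
      stateSpace_subset_closure_convexHull hM (coe_mem_stateSpace_iff.2 hL)
  refine ⟨(μ : Measure (semialgebraicSet H)).map Subtype.val,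
    Measure.isProbabilityMeasure_map measurable_subtype_coe.aemeasurable, ?_, fun q => ?_⟩
  · exact (ae_map_iff measurable_subtype_coe.aemeasurable hHm).2 (ae_of_all _ Subtype.property)
  · rw [hμ, (MeasurableEmbedding.subtype_coe hHm).integral_map]
    simp only [evalOnAlgHom_apply]

end PolynomialIntegral

section UniqueMinimizer

variable {α β : Type*} {s : Set α} {a : α} {F : α → ℝ}

/-- `a` is the unique minimizer of `F` on `s`; that `F a` is minimal follows, because any competitor
of value at most `F a` is `a` itself. -/
def IsUniqueMinOn (F : α → ℝ) (s : Set α) (a : α) : Prop :=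
  a ∈ s ∧ ∀ x ∈ s, F x ≤ F a → x = a

lemma IsUniqueMinOn.isMinOn (h : IsUniqueMinOn F s a) : IsMinOn F s a := fun x hx => by
  rcases le_total (F a) (F x) with hle | hle
  · exact hle
  · exact (congrArg F (h.2 x hx hle)).ge

lemma IsUniqueMinOn.image {F : β → ℝ} {g : α → β} (h : IsUniqueMinOn (F ∘ g) s a) :
    IsUniqueMinOn F (g '' s) (g a) := by
  refine ⟨mem_image_of_mem g h.1, ?_⟩
  rintro _ ⟨x, hx, rfl⟩ hle
  exact congrArg g (h.2 x hx hle)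

lemma isUniqueMinOn_of_setOf_eq_singleton (hbdd : BddBelow (F '' s))
    (h : {x ∈ s | F x = sInf (F '' s)} = {a}) : IsUniqueMinOn F s a := by
  obtain ⟨has, hFa⟩ := h.ge (mem_singleton a)
  refine ⟨has, fun x hx hle => h.le ⟨hx, ?_⟩⟩
  exact (hle.trans_eq hFa).antisymm (csInf_le hbdd (mem_image_of_mem F hx))

lemma IsUniqueMinOn.mem_iff_forall_rat [TopologicalSpace α] (h : IsUniqueMinOn F s a)
    (hs : IsCompact s) (hF : ContinuousOn F s) {D : Set α} (hD : IsClosed D) :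
    a ∈ D ↔ ∀ r : ℚ, (∃ x ∈ s, F x ≤ r) → ∃ x ∈ s ∩ D, F x ≤ r := by
  refine ⟨fun haD r ⟨x, hx, hxr⟩ => ⟨a, ⟨h.1, haD⟩, (h.isMinOn hx).trans hxr⟩, fun hr => ?_⟩
  have hsD (r : ℚ) (har : F a < r) : ∃ x ∈ s ∩ D, F x ≤ r := hr r ⟨a, h.1, har.le⟩
  obtain ⟨r, har⟩ := exists_rat_gt (F a)
  obtain ⟨x, hx, -⟩ := hsD r har
  obtain ⟨w, hw, hmin⟩ := (hs.inter_right hD).exists_isMinOn ⟨x, hx⟩ (hF.mono inter_subset_left)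
  have hle : F w ≤ F a := by
    refine le_of_forall_lt_rat_imp_le fun r har => ?_
    obtain ⟨x, hx, hxr⟩ := hsD r har
    exact (hmin hx).trans hxr
  exact h.2 w hw.1 hle ▸ hw.2

end UniqueMinimizer

section FibrewiseUniqueMinimizer

variable {Ω Y : Type*} [TopologicalSpace Ω] [SecondCountableTopology Ω] [MeasurableSpace Ω]
  [BorelSpace Ω] [TopologicalSpace Y] [T2Space Y] [MeasurableSpace Y] [BorelSpace Y]
  {S : Set Ω} {F : Ω → ℝ} {π : Ω → Y} {u : Y → Ω} {μ : Measure Ω} {φ : Measure Y}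

-- For closed `D`, whether `u y ∈ D` is decided by comparing, over rational levels `r`, the compact
-- sets `π '' (S ∩ {F ≤ r})` and `π '' (S ∩ {F ≤ r} ∩ D)`.
lemma aemeasurable_of_ae_isUniqueMinOn (hS : IsCompact S) (hF : Continuous F) (hπ : Continuous π)
    (hu : ∀ᵐ y ∂φ, IsUniqueMinOn F (S ∩ π ⁻¹' {y}) (u y)) : AEMeasurable u φ := by
  have hlevel (D : Set Ω) (hD : IsClosed D) (r : ℚ) :
      MeasurableSet {y | ∃ w ∈ S ∩ π ⁻¹' {y} ∩ D, F w ≤ r} := by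
    convert (((hS.inter_right hD).inter_right
      (isClosed_Iic (a := (r : ℝ)).preimage hF)).image hπ).measurableSet using 1
    ext y
    simp only [mem_ofPred_eq, mem_image, mem_inter_iff, mem_preimage, mem_singleton_iff, mem_Iic]
    grind
  have hclosed (D : Set Ω) (hD : IsClosed D) : NullMeasurableSet (u ⁻¹' D) φ := by
    have hmeas : MeasurableSet {y | ∀ r : ℚ, (∃ w ∈ S ∩ π ⁻¹' {y} ∩ univ, F w ≤ r) →
        ∃ w ∈ S ∩ π ⁻¹' {y} ∩ D, F w ≤ r} := by
      simp only [ofPred_forall]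
      exact MeasurableSet.iInter fun r => (hlevel univ isClosed_univ r).imp (hlevel D hD r)
    refine hmeas.nullMeasurableSet.congr (eventuallyEq_set.2 ?_)
    filter_upwards [hu] with y hy
    have hfibre := hS.inter_right ((isClosed_singleton (x := y)).preimage hπ)
    simpa using (hy.mem_iff_forall_rat hfibre hF.continuousOn hD).symm
  have hnull : NullMeasurable u φ := measurable_of_isClosed (δ := NullMeasurableSpace Y φ) hclosed
  exact hnull.aemeasurable

lemma map_map_of_ae_isUniqueMinOn (hS : IsCompact S) (hF : Continuous F) (hπ : Continuous π)
    (hu : ∀ᵐ y ∂φ, IsUniqueMinOn F (S ∩ π ⁻¹' {y}) (u y)) : (φ.map u).map π = φ := by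
  rw [AEMeasurable.map_map_of_aemeasurable hπ.aemeasurable
    (aemeasurable_of_ae_isUniqueMinOn hS hF hπ hu)]
  exact (Measure.map_congr (hu.mono fun _ hy => hy.1.2)).trans Measure.map_id

variable [T2Space Ω]

lemma ae_mem_map_of_ae_isUniqueMinOn (hS : IsCompact S) (hF : Continuous F) (hπ : Continuous π)
    (hu : ∀ᵐ y ∂φ, IsUniqueMinOn F (S ∩ π ⁻¹' {y}) (u y)) : ∀ᵐ w ∂φ.map u, w ∈ S :=
  (ae_map_iff (aemeasurable_of_ae_isUniqueMinOn hS hF hπ hu) hS.measurableSet).2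
    (hu.mono fun _ hy => hy.1.1)

lemma eq_map_of_integral_le_of_ae_isUniqueMinOn [IsFiniteMeasure μ] (hS : IsCompact S)
    (hF : Continuous F) (hπ : Continuous π)
    (hu : ∀ᵐ y ∂μ.map π, IsUniqueMinOn F (S ∩ π ⁻¹' {y}) (u y)) (hμ : ∀ᵐ w ∂μ, w ∈ S)
    (hle : ∫ w, F w ∂μ ≤ ∫ w, F w ∂(μ.map π).map u) : μ = (μ.map π).map u := by
  have hum := aemeasurable_of_ae_isUniqueMinOn hS hF hπ hu
  have hcomp : AEMeasurable (u ∘ π) μ := hum.comp_aemeasurable hπ.aemeasurable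
  have hsupp := ae_mem_map_of_ae_isUniqueMinOn hS hF hπ hu
  rw [AEMeasurable.map_map_of_aemeasurable hum hπ.aemeasurable] at hle hsupp ⊢
  have hu' : ∀ᵐ w ∂μ, IsUniqueMinOn F (S ∩ π ⁻¹' {π w}) (u (π w)) :=
    ae_of_ae_map hπ.aemeasurable hu
  have hFle : F ∘ u ∘ π ≤ᵐ[μ] F := by
    filter_upwards [hμ, hu'] with w hw hmin using hmin.isMinOn ⟨hw, rfl⟩
  have hint : Integrable (F ∘ u ∘ π) μ :=
    (integrable_of_ae_mem_of_isCompact hF hS hsupp).comp_aemeasurable hcomp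
  rw [integral_map hcomp hF.aestronglyMeasurable] at hle
  have hFeq : F ∘ u ∘ π =ᵐ[μ] F :=
    (integral_eq_iff_of_ae_le hint (integrable_of_ae_mem_of_isCompact hF hS hμ) hFle).1
      ((integral_mono_ae hint (integrable_of_ae_mem_of_isCompact hF hS hμ) hFle).antisymm hle)
  have hid : id =ᵐ[μ] u ∘ π := by
    filter_upwards [hμ, hu', hFeq] with w hw hmin heq using hmin.2 w ⟨hw, rfl⟩ heq.ge
  exact Measure.map_id.symm.trans (Measure.map_congr hid)

end FibrewiseUniqueMinimizer

section MomentRelaxation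

variable {n p : ℕ} {z : (Fin n → ℕ) → (Fin p → ℕ) → ℝ} {i : ℕ}

/-- The Riesz functional of `z`: the functional `Lz n p z` bundled as a linear form, so that limits
of feasible functionals can be treated as states of the quadratic module. -/
def rieszFunctional (n p : ℕ) (z : (Fin n → ℕ) → (Fin p → ℕ) → ℝ) :
    MvPolynomial (Fin n ⊕ Fin p) ℝ →ₗ[ℝ] ℝ :=
  (basisMonomials (Fin n ⊕ Fin p) ℝ).constr ℝ fun d =>
    z (fun k => d (Sum.inl k)) (fun l => d (Sum.inr l))

lemma coe_rieszFunctional : ⇑(rieszFunctional n p z) = Lz n p z := by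
  ext q
  rw [rieszFunctional, Module.Basis.constr_apply]
  rfl

lemma Lz_monomial (d : Fin n ⊕ Fin p →₀ ℕ) (c : ℝ) :
    Lz n p z (monomial d c) = c * z (fun k => d (Sum.inl k)) (fun l => d (Sum.inr l)) := by
  classical
  by_cases hc : c = 0
  · simp [Lz, hc]
  · simp [Lz, support_monomial, hc]

lemma degOK_of_totalDegree_le {q : MvPolynomial (Fin n ⊕ Fin p) ℝ} (hq : q.totalDegree ≤ i) :
    DegOK n p i q := fun d hd => by
  have hdeg := (le_totalDegree hd).trans hq
  rw [Finsupp.sum_fintype _ _ fun _ => rfl, Fintype.sum_sum_type] at hdeg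
  omega

variable {ι : Type*} [Fintype ι] {H : ι → MvPolynomial (Fin n ⊕ Fin p) ℝ} {γ : (Fin p → ℕ) → ℝ}
  {f : MvPolynomial (Fin n ⊕ Fin p) ℝ}

lemma ArchimedeanQM.isArchimedeanQuadraticModule (h : ArchimedeanQM n p H) :
    IsArchimedeanQuadraticModule (quadraticModule H) := by
  obtain ⟨N, σ0, σ, hσ0, hσ, hN⟩ := h
  have hM : IsQuadraticModule (quadraticModule H) := isQuadraticModule_quadraticModule
  refine hM.isArchimedeanQuadraticModule (N := N) (hN ▸ add_mem ?_ (sum_mem fun j _ => ?_))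
  · simpa only [mul_one] using hM.mul_mem_of_isSumSq hσ0 hM.one_mem
  · exact hM.mul_mem_of_isSumSq (hσ j)
      (mem_quadraticModule_of_mem_insert (mem_insert_of_mem 1 (mem_range_self j)))

lemma RelaxFeasible.Lz_one (hz : RelaxFeasible n p H γ i z) (hγ : γ (fun _ => 0) = 1) :
    Lz n p z 1 = 1 := by
  have h := Lz_monomial (z := z) 0 1
  simpa [hz.2.2 (fun _ => 0) (by simp), hγ] using h

lemma RelaxFeasible.Lz_rename_inr (hz : RelaxFeasible n p H γ i z) {q : MvPolynomial (Fin p) ℝ}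
    (hq : q.totalDegree ≤ 2 * i) :
    Lz n p z (rename Sum.inr q) = ∑ d ∈ q.support, q.coeff d * γ d := by
  conv_lhs => rw [q.as_sum]
  rw [← coe_rieszFunctional, map_sum, map_sum, coe_rieszFunctional]
  refine Finset.sum_congr rfl fun d hd => ?_
  have hdeg := (le_totalDegree hd).trans hq
  rw [Finsupp.sum_fintype _ _ fun _ => rfl] at hdeg
  rw [rename_monomial, Lz_monomial, ← hz.2.2 _ hdeg]
  congr 2 <;> ext k
  · exact Finsupp.mapDomain_of_notMem_range _ _ (by simp)
  · exact Finsupp.mapDomain_apply Sum.inr_injective _ _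

lemma eventually_forall_relaxFeasible_Lz_nonneg {q : MvPolynomial (Fin n ⊕ Fin p) ℝ}
    (hq : q ∈ quadraticModule H) :
    ∀ᶠ i in atTop, ∀ z, RelaxFeasible n p H γ i z → 0 ≤ Lz n p z q := by
  unfold quadraticModule at hq
  induction hq using AddSubmonoid.closure_induction with
  | mem q hq =>
    obtain ⟨b, g, rfl | ⟨j, rfl⟩, rfl⟩ := hq
    · filter_upwards [eventually_ge_atTop b.totalDegree] with i hi z hz
      rw [one_mul]
      exact hz.1 b (degOK_of_totalDegree_le hi)
    · filter_upwards [eventually_ge_atTop (b.totalDegree + halfDeg (H j))] with i hi z hz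
      exact hz.2.1 j b (degOK_of_totalDegree_le (Nat.le_sub_of_add_le hi))
  | zero => simp [Lz]
  | add q r _ _ hq hr =>
    filter_upwards [hq, hr] with i hqi hri z hz
    rw [← coe_rieszFunctional, map_add, coe_rieszFunctional]
    exact add_nonneg (hqi z hz) (hri z hz)

lemma eventually_forall_relaxFeasible_rhoSDP_le (hH : ArchimedeanQM n p H)
    (hγ : γ (fun _ => 0) = 1) :
    ∀ᶠ i in atTop, ∀ z, RelaxFeasible n p H γ i z → rhoSDP n p H γ f i ≤ Lz n p z f := by
  obtain ⟨N, hN⟩ := hH.isArchimedeanQuadraticModule.exists_sub_mem (-f)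
  filter_upwards [eventually_forall_relaxFeasible_Lz_nonneg hN] with i hi z hz
  refine csInf_le ⟨-N, ?_⟩ ⟨z, hz, rfl⟩
  rintro _ ⟨w, hw, rfl⟩
  have hone : rieszFunctional n p w 1 = 1 := by rw [coe_rieszFunctional, hw.Lz_one hγ]
  have hnonneg := hi w hw
  rw [← coe_rieszFunctional, map_sub, map_neg, map_algebraMap_of_map_one hone] at hnonneg
  rw [← coe_rieszFunctional]
  linarith

/-- The moment sequence of `μ`, with `x`- and `y`-exponents separated as in `Lz`; it is the feasible
point that a measure provides for every relaxation. -/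
def momentSeq (μ : Measure (Fin n ⊕ Fin p → ℝ)) (α : Fin n → ℕ) (β : Fin p → ℕ) : ℝ :=
  ∫ w, (∏ k, w (Sum.inl k) ^ α k) * ∏ l, w (Sum.inr l) ^ β l ∂μ

variable {μ ν : Measure (Fin n ⊕ Fin p → ℝ)}

lemma Lz_momentSeq [IsFiniteMeasure μ] {S : Set (Fin n ⊕ Fin p → ℝ)} (hS : IsCompact S)
    (hμ : ∀ᵐ w ∂μ, w ∈ S) (q : MvPolynomial (Fin n ⊕ Fin p) ℝ) :
    Lz n p (momentSeq μ) q = ∫ w, eval w q ∂μ := by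
  induction q using MvPolynomial.induction_on' with
  | monomial d c =>
    simp [Lz_monomial, momentSeq, eval_monomial, Finsupp.prod_fintype, Fintype.prod_sum_type,
      integral_const_mul]
  | add a b ha hb =>
    have hint (q : MvPolynomial (Fin n ⊕ Fin p) ℝ) : Integrable (fun w => eval w q) μ :=
      integrable_of_ae_mem_of_isCompact (continuous_eval q) hS hμ
    rw [← coe_rieszFunctional, map_add, coe_rieszFunctional, ha, hb,
      ← integral_add (hint a) (hint b)]
    simp only [map_add]

lemma relaxFeasible_momentSeq [IsFiniteMeasure μ] (hH : IsCompact (semialgebraicSet H))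
    (hμ : ∀ᵐ w ∂μ, w ∈ semialgebraicSet H) (hγ : ∀ β, γ β = ∫ w, ∏ l, w (Sum.inr l) ^ β l ∂μ) :
    RelaxFeasible n p H γ i (momentSeq μ) := by
  refine ⟨fun q _ => ?_, fun j q _ => ?_, fun β _ => by simp [momentSeq, hγ]⟩
  all_goals
    rw [Lz_momentSeq hH hμ]
    refine integral_nonneg_of_ae ?_
    filter_upwards [hμ] with w hw
  · simpa only [map_pow, Pi.zero_apply] using sq_nonneg (eval w q)
  · simpa only [map_mul, map_pow, Pi.zero_apply] using mul_nonneg (hw j) (sq_nonneg (eval w q))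

variable {z : ℕ → (Fin n → ℕ) → (Fin p → ℕ) → ℝ} {U : Ultrafilter ℕ} {ε : ℕ → ℝ}

lemma exists_measure_tendsto_Lz (hH : ArchimedeanQM n p H) (hγ : γ (fun _ => 0) = 1)
    (hU : ↑U ≤ (atTop : Filter ℕ)) (hz : ∀ᶠ i in atTop, RelaxFeasible n p H γ i (z i)) :
    ∃ μ : Measure (Fin n ⊕ Fin p → ℝ), IsProbabilityMeasure μ ∧
      (∀ᵐ w ∂μ, w ∈ semialgebraicSet H) ∧
      ∀ q, Tendsto (fun i => Lz n p (z i) q) U (𝓝 (∫ w, eval w q ∂μ)) := by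
  have hM := hH.isArchimedeanQuadraticModule
  obtain ⟨L, hL, hlim⟩ := exists_isState_tendsto hM (U := U)
    (Λ := fun i => rieszFunctional n p (z i))
    (hU <| hz.mono fun i hi => by rw [coe_rieszFunctional, hi.Lz_one hγ])
    (fun q hq => hU <| by
      filter_upwards [hz, eventually_forall_relaxFeasible_Lz_nonneg hq] with i hi hnonneg
      rw [coe_rieszFunctional]
      exact hnonneg _ hi)
  obtain ⟨μ, hμ, hsupp, hLμ⟩ := hL.exists_measure hM
  refine ⟨μ, hμ, hsupp, fun q => ?_⟩
  simpa only [coe_rieszFunctional, hLμ] using hlim q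

lemma map_comp_inr_eq_of_tendsto_Lz [IsFiniteMeasure μ] [IsFiniteMeasure ν]
    (hH : IsCompact (semialgebraicSet H)) (hμ : ∀ᵐ w ∂μ, w ∈ semialgebraicSet H)
    (hν : ∀ᵐ w ∂ν, w ∈ semialgebraicSet H) (hγ : ∀ β, γ β = ∫ w, ∏ l, w (Sum.inr l) ^ β l ∂ν)
    (hU : ↑U ≤ (atTop : Filter ℕ)) (hz : ∀ᶠ i in atTop, RelaxFeasible n p H γ i (z i))
    (hlim : ∀ q, Tendsto (fun i => Lz n p (z i) q) U (𝓝 (∫ w, eval w q ∂μ))) :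
    μ.map (· ∘ Sum.inr) = ν.map (· ∘ Sum.inr) := by
  have hπ : Continuous fun w : Fin n ⊕ Fin p → ℝ => w ∘ Sum.inr := by fun_prop
  have hS := hH.image hπ
  have hmap {ξ : Measure (Fin n ⊕ Fin p → ℝ)} (hξ : ∀ᵐ w ∂ξ, w ∈ semialgebraicSet H) :
      ∀ᵐ y ∂ξ.map (· ∘ Sum.inr), y ∈ (· ∘ Sum.inr) '' semialgebraicSet H :=
    (ae_map_iff hπ.aemeasurable hS.measurableSet).2 (hξ.mono fun w => mem_image_of_mem _)
  refine measure_ext_of_integral_eval_eq hS (hmap hμ) (hmap hν) fun q => ?_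
  rw [integral_map hπ.aemeasurable (continuous_eval q).aestronglyMeasurable,
    integral_map hπ.aemeasurable (continuous_eval q).aestronglyMeasurable]
  simp only [← eval_rename]
  rw [← Lz_momentSeq hH hν]
  refine tendsto_nhds_unique (hlim _) (tendsto_const_nhds.congr' (hU ?_))
  filter_upwards [hz, eventually_ge_atTop q.totalDegree] with i hi hdeg
  have hdeg' : q.totalDegree ≤ 2 * i := by omega
  rw [hi.Lz_rename_inr hdeg', (relaxFeasible_momentSeq hH hν hγ).Lz_rename_inr hdeg']

lemma integral_le_of_tendsto_Lz [IsProbabilityMeasure ν] (hH : ArchimedeanQM n p H)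
    (hν : ∀ᵐ w ∂ν, w ∈ semialgebraicSet H) (hγ : ∀ β, γ β = ∫ w, ∏ l, w (Sum.inr l) ^ β l ∂ν)
    (hU : ↑U ≤ (atTop : Filter ℕ)) (hε : Tendsto ε atTop (𝓝 0))
    (hz : ∀ᶠ i in atTop, Lz n p (z i) f ≤ rhoSDP n p H γ f i + ε i)
    (hlim : Tendsto (fun i => Lz n p (z i) f) U (𝓝 (∫ w, eval w f ∂μ))) :
    ∫ w, eval w f ∂μ ≤ ∫ w, eval w f ∂ν := by
  have hS := isCompact_semialgebraicSet hH.isArchimedeanQuadraticModule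
  have hbound : Tendsto (fun i => ∫ w, eval w f ∂ν + ε i) U (𝓝 (∫ w, eval w f ∂ν)) := by
    simpa only [add_zero] using (tendsto_const_nhds.add hε).mono_left hU
  refine le_of_tendsto_of_tendsto hlim hbound (hU ?_)
  filter_upwards [hz, eventually_forall_relaxFeasible_rhoSDP_le (f := f) (γ := γ) hH
    (by simp [hγ])] with i hi hrho
  refine hi.trans (add_le_add_left ?_ _)
  rw [← Lz_momentSeq hS hν]
  exact hrho _ (relaxFeasible_momentSeq hS hν hγ)

end MomentRelaxation

section ProductForm

variable {m s n p : ℕ} {hx : Fin m → MvPolynomial (Fin n ⊕ Fin p) ℝ}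
  {hy : Fin s → MvPolynomial (Fin p) ℝ} {y : Fin p → ℝ}

lemma semialgebraicSet_sumElim_inter_preimage_comp_inr (hyY : y ∈ semialgebraicSet hy) :
    semialgebraicSet (Sum.elim hx fun k => rename Sum.inr (hy k)) ∩ (· ∘ Sum.inr) ⁻¹' {y} =
      (Sum.elim · y) '' {x | ∀ j, 0 ≤ eval (Sum.elim x y) (hx j)} := by
  ext w
  constructor
  · rintro ⟨hw, rfl⟩
    exact ⟨w ∘ Sum.inl, fun j => by simpa using hw (Sum.inl j), Sum.elim_comp_inl_inr w⟩
  · rintro ⟨x, hx', rfl⟩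
    refine ⟨Sum.rec hx' fun k => ?_, Sum.elim_comp_inr x y⟩
    simpa [eval_rename] using hyY k

lemma isUniqueMinOn_sumElim {f : MvPolynomial (Fin n ⊕ Fin p) ℝ} {a : Fin n → ℝ}
    {S : Set (Fin n → ℝ)}
    (hH : IsCompact (semialgebraicSet (Sum.elim hx fun k => rename Sum.inr (hy k))))
    (hyY : y ∈ semialgebraicSet hy) (hS : S = {x | ∀ j, 0 ≤ eval (Sum.elim x y) (hx j)})
    (h : {x ∈ S | eval (Sum.elim x y) f = sInf ((fun x => eval (Sum.elim x y) f) '' S)} = {a}) :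
    IsUniqueMinOn (fun w => eval w f)
      (semialgebraicSet (Sum.elim hx fun k => rename Sum.inr (hy k)) ∩ (· ∘ Sum.inr) ⁻¹' {y})
      (Sum.elim a y) := by
  have hbdd := (hH.bddBelow_image (continuous_eval f).continuousOn).mono
    (image_mono (inter_subset_left (t := (· ∘ Sum.inr) ⁻¹' {y})))
  rw [semialgebraicSet_sumElim_inter_preimage_comp_inr hyY, ← hS] at hbdd ⊢
  rw [image_image] at hbdd
  exact IsUniqueMinOn.image (F := fun w => eval w f) (g := (Sum.elim · y))
    (isUniqueMinOn_of_setOf_eq_singleton hbdd h)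

end ProductForm

theorem stmt15_general {n p : ℕ} {ι : Type*} [Fintype ι]
    {H : ι → MvPolynomial (Fin n ⊕ Fin p) ℝ} {f : MvPolynomial (Fin n ⊕ Fin p) ℝ}
    (hH : ArchimedeanQM n p H) {φ : Measure (Fin p → ℝ)} [IsProbabilityMeasure φ]
    {γ : (Fin p → ℕ) → ℝ} (hγ : ∀ β, γ β = ∫ y, ∏ l, y l ^ β l ∂φ)
    {u : (Fin p → ℝ) → Fin n ⊕ Fin p → ℝ}
    (hu : ∀ᵐ y ∂φ, IsUniqueMinOn (fun w => eval w f)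
      (semialgebraicSet H ∩ (· ∘ Sum.inr) ⁻¹' {y}) (u y))
    {z : ℕ → (Fin n → ℕ) → (Fin p → ℕ) → ℝ} {ε : ℕ → ℝ} (hε : Tendsto ε atTop (𝓝 0))
    (hz : ∀ᶠ i in atTop, RelaxFeasible n p H γ i (z i) ∧
      Lz n p (z i) f ≤ rhoSDP n p H γ f i + ε i) (q : MvPolynomial (Fin n ⊕ Fin p) ℝ) :
    Tendsto (fun i => Lz n p (z i) q) atTop (𝓝 (∫ y, eval (u y) q ∂φ)) := by
  have hS := isCompact_semialgebraicSet hH.isArchimedeanQuadraticModule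
  have hF := continuous_eval f
  have hπ : Continuous fun w : Fin n ⊕ Fin p → ℝ => w ∘ Sum.inr := by fun_prop
  have hum := aemeasurable_of_ae_isUniqueMinOn hS hF hπ hu
  have hν := ae_mem_map_of_ae_isUniqueMinOn hS hF hπ hu
  have hνφ := map_map_of_ae_isUniqueMinOn hS hF hπ hu
  have : IsProbabilityMeasure (φ.map u) := Measure.isProbabilityMeasure_map hum
  have hνγ (β : Fin p → ℕ) : γ β = ∫ w, ∏ l, w (Sum.inr l) ^ β l ∂φ.map u := by
    have hmeas : Measurable fun y : Fin p → ℝ => ∏ l, y l ^ β l := by fun_prop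
    have hmap := integral_map (μ := φ.map u) hπ.aemeasurable hmeas.aestronglyMeasurable
    rw [hνφ] at hmap
    exact (hγ β).trans hmap
  rw [← integral_map hum (continuous_eval q).aestronglyMeasurable, tendsto_iff_ultrafilter]
  intro U hU
  obtain ⟨μ, hμ, hμS, hlim⟩ :=
    exists_measure_tendsto_Lz hH (by simp [hγ]) hU (hz.mono fun _ h => h.1)
  have hμφ : μ.map (· ∘ Sum.inr) = φ :=
    (map_comp_inr_eq_of_tendsto_Lz hS hμS hν hνγ hU (hz.mono fun _ h => h.1) hlim).trans hνφ
  have hle := integral_le_of_tendsto_Lz hH hν hνγ hU hε (hz.mono fun _ h => h.2) (hlim f)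
  have hopt : μ = (μ.map (· ∘ Sum.inr)).map u :=
    eq_map_of_integral_le_of_ae_isUniqueMinOn hS hF hπ (hμφ.symm ▸ hu) hμS (hμφ.symm ▸ hle)
  rw [hμφ] at hopt
  exact hopt ▸ hlim q

/-- approximation of polynomial functionals of the optimal solutions,
`Σ_α h_α z^i_{α0} → ∫_Y h(x*(y)) dφ`. -/
theorem stmt15 (n p m s : ℕ)
    (f : MvPolynomial (Fin n ⊕ Fin p) ℝ)
    (hx : Fin m → MvPolynomial (Fin n ⊕ Fin p) ℝ)
    (hy : Fin s → MvPolynomial (Fin p) ℝ)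
    (H : Fin m ⊕ Fin s → MvPolynomial (Fin n ⊕ Fin p) ℝ)
    (hH : H = Sum.elim hx (fun k => rename Sum.inr (hy k)))
    (Y : Set (Fin p → ℝ)) (hYdef : Y = {y | ∀ k, 0 ≤ eval y (hy k)}) (hYc : IsCompact Y)
    (K : Set ((Fin n → ℝ) × (Fin p → ℝ)))
    (hKdef : K = {w | w.2 ∈ Y ∧ ∀ j, 0 ≤ evalXY n p (hx j) w}) (hKc : IsCompact K)
    (Ky : (Fin p → ℝ) → Set (Fin n → ℝ))
    (hKy : ∀ y, Ky y = {x | ∀ j, 0 ≤ eval (Sum.elim x y) (hx j)})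
    (hne : ∀ y ∈ Y, (Ky y).Nonempty)
    (harch : ArchimedeanQM n p H)
    (φ : Measure (Fin p → ℝ)) [IsProbabilityMeasure φ] (hφY : φ Yᶜ = 0)
    (γ : (Fin p → ℕ) → ℝ)
    (hγ : ∀ β, γ β = ∫ y in Y, ∏ l, y l ^ β l ∂φ)
    (J : (Fin p → ℝ) → ℝ)
    (hJ : ∀ y, J y = sInf ((fun x => evalXY n p f (x, y)) '' Ky y))
    (Xstar : (Fin p → ℝ) → Set (Fin n → ℝ))
    (hXs : ∀ y, Xstar y = {x ∈ Ky y | evalXY n p f (x, y) = J y})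
    (xstar : (Fin p → ℝ) → (Fin n → ℝ))
    (hxu : ∀ᵐ y ∂φ, Xstar y = {xstar y})
    (zi : ℕ → (Fin n → ℕ) → (Fin p → ℕ) → ℝ)
    (hzi : ∀ i, iZero n p H f ≤ i →
      RelaxFeasible n p H γ i (zi i) ∧
      Lz n p (zi i) f ≤ rhoSDP n p H γ f i + 1 / (i : ℝ))
    (hpol : MvPolynomial (Fin n) ℝ) :
    Tendsto (fun i => Lz n p (zi i) (rename Sum.inl hpol)) atTop
      (𝓝 (∫ y in Y, eval (xstar y) hpol ∂φ)) := by
  subst hH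
  obtain rfl : Y = semialgebraicSet hy := hYdef
  have hφY : ∀ᵐ y ∂φ, y ∈ semialgebraicSet hy := hφY
  rw [Measure.restrict_eq_self_of_ae_mem hφY] at hγ ⊢
  simp only [hXs, hJ] at hxu
  have hcompact := isCompact_semialgebraicSet harch.isArchimedeanQuadraticModule
  have hu := (hφY.and hxu).mono fun y h => isUniqueMinOn_sumElim hcompact h.1 (hKy y) h.2
  simpa [eval_rename] using stmt15_general harch hγ hu tendsto_one_div_atTop_nhds_zero_nat
    ((eventually_ge_atTop _).mono hzi) (rename Sum.inl hpol)
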